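/- On the unit circle the zero-friction flow field satisfies the no-penetration condition and Navier's slip condition with friction coefficient β = 0: for every (x,y) ∈ Γ one has u_Z(x,y)·n = 0 and nᵗ(∇u_Z + ∇u_Zᵗ)τ = 0. -/

import Mathlib

/-!
On the unit circle `log r = 0`, so `u_Z = (y², -xy)`, which is visibly orthogonal to `n`.
For the slip condition, the derivatives at a point with `x² + y² = 1` are
`∂ₓu₁ = x - 2xy²`, `∂ᵧu₁ = 3y - 2y³`, `∂ₓu₂ = 2x²y - y`, `∂ᵧu₂ = 2xy² - x`.
With `S = ∇u + ∇uᵗ` one has `nᵗSτ = (x² - y²) S₁₂ - xy (S₁₁ - S₂₂)`, and on the circle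
`S₁₂ = 4x²y` and `S₁₁ - S₂₂ = 4x(x² - y²)`, so the two terms cancel.
-/

noncomputable section
open Matrix

/-- Partial derivative in the first variable. -/
def pdx (f : ℝ → ℝ → ℝ) (x y : ℝ) : ℝ := deriv (fun t => f t y) x

/-- Partial derivative in the second variable. -/
def pdy (f : ℝ → ℝ → ℝ) (x y : ℝ) : ℝ := deriv (fun t => f x t) y

/-- Jacobian matrix `∇u` of the vector field `u = (u1, u2)`. -/
def jac (u1 u2 : ℝ → ℝ → ℝ) (x y : ℝ) : Matrix (Fin 2) (Fin 2) ℝ :=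
  !![pdx u1 x y, pdy u1 x y; pdx u2 x y, pdy u2 x y]

/-- Bilinear evaluation `nᵗ M τ` of a 2×2 matrix at the vectors `n` and `τ`. -/
def bilin (n : ℝ × ℝ) (M : Matrix (Fin 2) (Fin 2) ℝ) (τ : ℝ × ℝ) : ℝ :=
  n.1 * (M 0 0 * τ.1 + M 0 1 * τ.2) + n.2 * (M 1 0 * τ.1 + M 1 1 * τ.2)

/-- First component of the zero-friction flow field. -/
def uZ1 (x y : ℝ) : ℝ := y ^ 2 / (x ^ 2 + y ^ 2) + Real.log (Real.sqrt (x ^ 2 + y ^ 2))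

/-- Second component of the zero-friction flow field. -/
def uZ2 (x y : ℝ) : ℝ := -(x * y) / (x ^ 2 + y ^ 2)

lemma hasDerivAt_sq_add (x y : ℝ) : HasDerivAt (fun t : ℝ => t ^ 2 + y ^ 2) (2 * x) x := by
  simpa using (hasDerivAt_pow 2 x).add_const (y ^ 2)

lemma hasDerivAt_add_sq (x y : ℝ) : HasDerivAt (fun t : ℝ => x ^ 2 + t ^ 2) (2 * y) y := by
  simpa using (hasDerivAt_pow 2 y).const_add (x ^ 2)

lemma log_sqrt_sq_add_sq (x y : ℝ) :
    Real.log (Real.sqrt (x ^ 2 + y ^ 2)) = Real.log (x ^ 2 + y ^ 2) / 2 :=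
  Real.log_sqrt (by positivity)

lemma pdx_uZ1 {x y : ℝ} (h : x ^ 2 + y ^ 2 = 1) : pdx uZ1 x y = x - 2 * x * y ^ 2 := by
  have h0 : x ^ 2 + y ^ 2 ≠ 0 := by simp [h]
  have hr := hasDerivAt_sq_add x y
  simp only [pdx, uZ1, log_sqrt_sq_add_sq]
  rw [(((hasDerivAt_const x (y ^ 2)).fun_div hr h0).fun_add ((hr.log h0).div_const 2)).deriv, h]
  ring

lemma pdy_uZ1 {x y : ℝ} (h : x ^ 2 + y ^ 2 = 1) : pdy uZ1 x y = 3 * y - 2 * y ^ 3 := by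
  have h0 : x ^ 2 + y ^ 2 ≠ 0 := by simp [h]
  have hr := hasDerivAt_add_sq x y
  simp only [pdy, uZ1, log_sqrt_sq_add_sq]
  rw [(((hasDerivAt_pow 2 y).fun_div hr h0).fun_add ((hr.log h0).div_const 2)).deriv, h]
  norm_num
  ring

lemma pdx_uZ2 {x y : ℝ} (h : x ^ 2 + y ^ 2 = 1) : pdx uZ2 x y = 2 * x ^ 2 * y - y := by
  have h0 : x ^ 2 + y ^ 2 ≠ 0 := by simp [h]
  simp only [pdx, uZ2]
  rw [(((hasDerivAt_id' x).mul_const y).fun_neg.fun_div (hasDerivAt_sq_add x y) h0).deriv, h]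
  ring

lemma pdy_uZ2 {x y : ℝ} (h : x ^ 2 + y ^ 2 = 1) : pdy uZ2 x y = 2 * x * y ^ 2 - x := by
  have h0 : x ^ 2 + y ^ 2 ≠ 0 := by simp [h]
  simp only [pdy, uZ2]
  rw [(((hasDerivAt_id' y).const_mul x).fun_neg.fun_div (hasDerivAt_add_sq x y) h0).deriv, h]
  ring

/-- On the unit circle, with `n = (−x,−y)` and `τ = (y,−x)`, the zero-friction flow
satisfies the no-penetration condition `u_Z·n = 0` and Navier's slip condition with
friction coefficient `β = 0`: `nᵗ(∇u_Z + ∇u_Zᵗ)τ = 0`. -/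
theorem stmt_6 :
    ∀ x y : ℝ, x ^ 2 + y ^ 2 = 1 →
      (uZ1 x y * (-x) + uZ2 x y * (-y) = 0) ∧
      bilin (-x, -y) (jac uZ1 uZ2 x y + (jac uZ1 uZ2 x y)ᵀ) (y, -x) = 0 := by
  intro x y h
  refine ⟨?_, ?_⟩
  · simp only [uZ1, uZ2, h, Real.sqrt_one, Real.log_one]
    ring
  · simp only [bilin, jac, Matrix.add_apply, Matrix.transpose_apply, Matrix.of_apply,
      Matrix.cons_val', Matrix.cons_val_zero, Matrix.cons_val_one, Matrix.cons_val_fin_one,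
      pdx_uZ1 h, pdy_uZ1 h, pdx_uZ2 h, pdy_uZ2 h]
    -- The form equals `2y(x² + y²)(x² + y² - 1)`, a multiple of the defining equation.
    linear_combination (2 * y * (x ^ 2 + y ^ 2)) * h

end
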